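/- Let w be a Kreweras word of length 3n. Then evac(w) = (w_{σ_w(3n)}, w_{σ_w(3n−1)}, …, w_{σ_w(1)}), i.e., for every i ∈ {1,…,3n}, the letter of evac(w) in position i equals w_{σ_w(3n+1−i)}. -/

import Mathlib

/-- The three letters of a Kreweras word. -/
inductive KLetter : Type
  | A | B | C
deriving DecidableEq, Repr

open KLetter

/-- `w` is a Kreweras word of length `3 * n`: it has `n` `A`'s, `n` `B`'s, `n` `C`'s,
and every prefix has at least as many `A`'s as `B`'s and at least as many `A`'s as `C`'s. -/
def IsKrewerasWord (n : ℕ) (w : List KLetter) : Prop :=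
  w.length = 3 * n ∧ w.count A = n ∧ w.count B = n ∧ w.count C = n ∧
  ∀ k : ℕ, (w.take k).count B ≤ (w.take k).count A ∧
           (w.take k).count C ≤ (w.take k).count A

/-- `kiota w` is the smallest index `ι ≥ 1` (1-indexed) such that the prefix of
length `ι` of `w` has equally many `A`'s as `B`'s, or equally many `A`'s as `C`'s
(and `0` if no such index exists). -/
def kiota (w : List KLetter) : ℕ :=
  (((List.range (w.length + 1)).filter fun k =>
      decide (1 ≤ k) &&
      (((w.take k).count A == (w.take k).count B) ||
       ((w.take k).count A == (w.take k).count C))).headD 0)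

/-- Promotion of a Kreweras word:
`pro w = (w₂, …, w_{ι-1}, A, w_{ι+1}, …, w_{3n}, w_ι)` where `ι = kiota w`. -/
def pro (w : List KLetter) : List KLetter :=
  ((w.drop 1).set (kiota w - 2) A) ++ [w.getD (kiota w - 1) A]

/-- The trip permutation `σ_w` of a Kreweras word of length `3 * n`, as a function on
1-indexed positions: `σ_w i` is the unique element of `{1, …, 3n}` congruent to
`kiota (pro^[i-1] w) + i - 1` modulo `3 * n`. -/
def ksigma (n : ℕ) (w : List KLetter) (i : ℕ) : ℕ :=
  (kiota (pro^[i - 1] w) + i - 2) % (3 * n) + 1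

/-- `keps w i` is the letter of `pro^[i-1] w` in (1-indexed) position `kiota (pro^[i-1] w)`. -/
def keps (w : List KLetter) (i : ℕ) : KLetter :=
  (pro^[i - 1] w).getD (kiota (pro^[i - 1] w) - 1) A

/-- The negation swapping `B` and `C` (and fixing `A`). -/
def negL : KLetter → KLetter
  | A => A
  | B => C
  | C => B

open Classical in
/-- The involution `τ_i` on Kreweras words of length `3 * n`: swap the letters in
(1-indexed) positions `i` and `i + 1` if the result is again a Kreweras word,
and otherwise do nothing. -/
noncomputable def tau (n i : ℕ) (w : List KLetter) : List KLetter :=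
  let w' := (w.set (i - 1) (w.getD i A)).set i (w.getD (i - 1) A)
  if IsKrewerasWord n w' then w' else w

/-- `tauDown n j = τ_j ∘ τ_{j-1} ∘ ⋯ ∘ τ_1`. -/
noncomputable def tauDown (n : ℕ) : ℕ → List KLetter → List KLetter
  | 0, w => w
  | j + 1, w => tau n (j + 1) (tauDown n j w)

/-- `evacAux n j = (tauDown n 1) ∘ (tauDown n 2) ∘ ⋯ ∘ (tauDown n j)`. -/
noncomputable def evacAux (n : ℕ) : ℕ → List KLetter → List KLetter
  | 0, w => w
  | j + 1, w => evacAux n j (tauDown n (j + 1) w)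

/-- Evacuation on Kreweras words of length `3 * n`:
`evac = (τ_1) ∘ (τ_2 ∘ τ_1) ∘ ⋯ ∘ (τ_{3n-1} ∘ ⋯ ∘ τ_2 ∘ τ_1)`. -/
noncomputable def evac (n : ℕ) (w : List KLetter) : List KLetter :=
  evacAux n (3 * n - 1) w

/-- `tauAsc n k c = τ_{k+c-1} ∘ ⋯ ∘ τ_{k+1} ∘ τ_k`. -/
noncomputable def tauAsc (n k : ℕ) : ℕ → List KLetter → List KLetter
  | 0, w => w
  | j + 1, w => tau n (k + j) (tauAsc n k j w)

/-- `evacStarAux n j = (tauAsc n 1 (3n-1)) ∘ (tauAsc n 2 (3n-2)) ∘ ⋯ ∘ (tauAsc n j (3n-j))`. -/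
noncomputable def evacStarAux (n : ℕ) : ℕ → List KLetter → List KLetter
  | 0, w => w
  | j + 1, w => evacStarAux n j (tauAsc n (j + 1) (3 * n - (j + 1)) w)

/-- Dual evacuation on Kreweras words of length `3 * n`:
`evac* = (τ_{3n-1} ∘ ⋯ ∘ τ_1) ∘ (τ_{3n-1} ∘ ⋯ ∘ τ_2) ∘ ⋯ ∘ (τ_{3n-1})`. -/
noncomputable def evacStar (n : ℕ) (w : List KLetter) : List KLetter :=
  evacStarAux n (3 * n - 1) w

/-- The three-element "V"-shaped poset: `a < b`, `a < c`, with `b`, `c` incomparable. -/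
inductive VP : Type
  | a | b | c
deriving DecidableEq

instance : PartialOrder VP where
  le x y := x = y ∨ x = VP.a
  le_refl x := Or.inl rfl
  le_trans x y z hxy hyz := by
    rcases hxy with rfl | rfl
    · exact hyz
    · exact Or.inr rfl
  le_antisymm x y hxy hyx := by
    rcases hxy with rfl | rfl
    · rfl
    · rcases hyx with rfl | rfl <;> rfl

/-- The labeling of elements of `V(n) = VP × Fin n` by letters. -/
def vlabel {n : ℕ} (p : VP × Fin n) : KLetter :=
  match p.1 with
  | VP.a => A
  | VP.b => B
  | VP.c => C

/-- `L` is a linear extension of `V(n) = VP × Fin n` (with the product order):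
a list of all elements of `V(n)`, each appearing once, such that `L_i ≤ L_j`
implies `i ≤ j`. -/
def IsLinearExtension (n : ℕ) (L : List (VP × Fin n)) : Prop :=
  L.Nodup ∧ (∀ p : VP × Fin n, p ∈ L) ∧
  ∀ i j : Fin L.length, L.get i ≤ L.get j → (i : ℕ) ≤ (j : ℕ)

/-- A connected Kreweras word: a Kreweras word of length `3 * n` having no proper
nonempty consecutive substring which is itself a Kreweras word. -/
def ConnectedKrewerasWord (n : ℕ) (w : List KLetter) : Prop :=
  IsKrewerasWord n w ∧
  ∀ (u : List KLetter) (m : ℕ), u <:+: w → u ≠ [] → u ≠ w → ¬ IsKrewerasWord m u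

/-!
Every `A` of a Kreweras word opens an arc which then receives one `B` and one `C`, each of these
letters going to the innermost open arc still awaiting it. A trip enters the resulting diagram at
one position and leaves it at another, and the trip entering at the first position leaves at the
bump `ι(w)`. The diagram of the promotion is almost that of the word rotated by one position: as
long as both words are read in parallel, their stacks of open arcs differ in one of three ways, and
this lets one follow a trip of the promotion by a trip of the word. Hence promotion rotates the
trips, so that `ι(pro^k w)` is periodic in `k` with period `3n`.

On the other hand the toggles building evacuation perform successive promotions on shorter and
shorter prefixes, and so the letter of `evac w` at position `i` is the one in transit at the end of
the toggles of the promotion number `3n + 1 - i`. If that promotion meets its bump in time, this is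
the letter at the bump, which comes from position `σ_w(3n + 1 - i)` of `w`. Otherwise it is `A`, and
then so is the letter of `w` at that position: any other letter would have to be bumped too, and by
periodicity no position is bumped twice.
-/

namespace Kreweras

/-! ### Trips -/

/-- The effect of one letter on the stack of open arcs, counted from the innermost one: open a new
arc, or receive the letter in the arc of index `d`, which stays open (`turn d`) or is closed
(`pop d`). -/
inductive Move : Type
  | push
  | turn (d : ℕ)
  | pop (d : ℕ)

/-- A state of a trip through a bump diagram: entering at position `p`, travelling forwards or
backwards along the arc of index `i` in the gap just before position `j`, or having left the
diagram at position `p`. -/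
inductive TripState : Type
  | enter (p : ℕ)
  | fwd (j i : ℕ)
  | bwd (j i : ℕ)
  | exit (p : ℕ)

open Move TripState

/-- One step of a trip: the passage through one position of the diagram with moves `κ`. -/
def tripStep (κ : ℕ → Move) : TripState → TripState
  | enter p => match κ p with
    | push => fwd (p + 1) 0
    | turn _ => fwd (p + 1) 0
    | pop d => if d = 0 then bwd p 0 else fwd (p + 1) 0
  | fwd j i => match κ j with
    | push => fwd (j + 1) (i + 1)
    | turn d => if i < d then fwd (j + 1) (i + 1) else if i = d then exit j else fwd (j + 1) i
    | pop d =>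
      if i + 1 < d then fwd (j + 1) (i + 1) else if i + 1 = d then bwd j d
      else if i = d then exit j else fwd (j + 1) (i - 1)
  | bwd 0 i => bwd 0 i
  | bwd (j + 1) i => match κ j with
    | push => if i = 0 then exit j else bwd j (i - 1)
    | turn _ => bwd j i
    | pop d => if i < d then bwd j i else bwd j (i + 1)
  | exit p => exit p

/-- The trip through `s` later visits `t`. -/
def Reaches (κ : ℕ → Move) : TripState → TripState → Prop :=
  Relation.ReflTransGen fun s t => tripStep κ s = t

section Reaches

variable {κ : ℕ → Move} {s t u : TripState} {p q : ℕ}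

theorem reaches_tripStep (κ : ℕ → Move) (s : TripState) : Reaches κ s (tripStep κ s) :=
  .single rfl

theorem exists_reaches_of_or {P : TripState → Prop} (h : P t ∨ P (tripStep κ t)) :
    ∃ t', Reaches κ t t' ∧ P t' := by
  rcases h with h | h
  exacts [⟨t, .refl, h⟩, ⟨_, reaches_tripStep κ t, h⟩]

theorem Reaches.eq_of_exit (h : Reaches κ (exit p) s) : s = exit p := by
  induction h with
  | refl => rfl
  | tail _ hstep ih => rw [← hstep, ih, tripStep]

theorem Reaches.exit_unique (hp : Reaches κ s (exit p)) (hq : Reaches κ s (exit q)) : p = q := by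
  have hdet : Relator.RightUnique fun s t => tripStep κ s = t := fun _ _ _ h h' => h.symm.trans h'
  rcases Relation.ReflTransGen.total_of_right_unique hdet hp hq with h | h
  · exact (exit.inj (Reaches.eq_of_exit h)).symm
  · exact exit.inj (Reaches.eq_of_exit h)

end Reaches

/-! ### Trips of a word and of its promotion -/

/-- How the stack of open arcs of a word compares with that of its promotion. The `s` innermost
arcs are common to both; below them the word has
* `preBump s`: one further arc, the one opened at position `0`;
* `postBump s p`: `p + 1` further arcs, of which only the innermost one awaits different letters in
  the promoted word;
* `shifted s p t`: `p` further arcs, which the promoted word has below an arc of its own; `t` is the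
  state of the trip of the word that matches travelling forwards along this arc. -/
inductive Phase : Type
  | preBump (s : ℕ)
  | postBump (s p : ℕ)
  | shifted (s p : ℕ) (t : TripState)

open Phase

/-- The number of innermost arcs common to the two stacks compared by a phase. -/
def Phase.shared : Phase → ℕ
  | preBump s => s
  | postBump s _ => s
  | shifted s _ _ => s

/-- The phase with the number of shared arcs replaced by `s`. -/
def Phase.withShared (s : ℕ) : Phase → Phase
  | preBump _ => preBump s
  | postBump _ p => postBump s p
  | shifted _ p t => shifted s p t

/-- The move only involves the `s` innermost arcs, and turns them into `s'` arcs. -/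
def Move.ActsWithin (s s' : ℕ) : Move → Prop
  | push => s' = s + 1
  | turn d => d < s ∧ s' = s
  | pop d => d < s ∧ s' + 1 = s

/-- The possible changes of phase when the word makes a move at position `j + 1` and its promotion
makes the corresponding one at position `j`. -/
inductive PhaseStep (j : ℕ) : Move → Move → Phase → Phase → Prop
  | within {m : Move} {q : Phase} {s : ℕ} (h : m.ActsWithin q.shared s) :
      PhaseStep j m m q (q.withShared s)
  | bump (s : ℕ) : PhaseStep j (turn s) push (preBump s) (postBump 0 s)
  | shift (s p : ℕ) :
      PhaseStep j (pop s) (turn s) (postBump s p) (shifted s p (bwd (j + 1) s))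
  | reshift (s p : ℕ) (t : TripState) :
      PhaseStep j (pop s) (pop (s + 1)) (shifted s (p + 1) t) (shifted s p (bwd (j + 1) s))

/-- The phases `ph` compare the moves `κ` of a word of length `N` with the moves `κ'` of its
promotion: `ph j` concerns the stacks after `j + 1` letters of the word and after `j` letters of
the promotion. -/
structure Comparison (κ κ' : ℕ → Move) (N : ℕ) (ph : ℕ → Phase) : Prop where
  zero : ph 0 = preBump 0
  step : ∀ j, j + 1 < N → PhaseStep j (κ (j + 1)) (κ' j) (ph j) (ph (j + 1))
  push_zero : κ 0 = push
  last : ∃ t, ph (N - 1) = shifted 0 0 t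
  pop_last : κ' (N - 1) = pop 0

/-- The state `t` of the trip of a word matches the state `fwd j i` of the trip of its promotion,
depending on the phase at `j`. -/
def FwdRelated (j i : ℕ) (t : TripState) : Phase → Prop
  | preBump s => i < s ∧ t = fwd (j + 1) i
  | postBump s p => i ≤ s + p ∧ t = fwd (j + 1) i
  | shifted s p u =>
      (i < s ∧ t = fwd (j + 1) i) ∨ (i = s ∧ t = u) ∨
        (s < i ∧ i ≤ s + p ∧ t = fwd (j + 1) (i - 1))

/-- The state `t` of the trip of a word matches the state `bwd j i` of the trip of its promotion,
depending on the phase at `j`. The arc which the promotion opens where the word has its bump has no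
counterpart; a trip going back along it leaves there, as does the trip of the word entering at
`0`. -/
def BwdRelated (j i : ℕ) (t : TripState) : Phase → Prop
  | preBump s => i < s ∧ t = bwd (j + 1) i
  | postBump s p =>
      (i < s ∧ t = bwd (j + 1) i) ∨ (i = s ∧ t = enter 0) ∨
        (s < i ∧ i ≤ s + p ∧ t = bwd (j + 1) (i - 1))
  | shifted s p u =>
      (i < s ∧ t = bwd (j + 1) i) ∨ (i = s ∧ t = enter 0) ∨ (i = s + 1 ∧ 1 ≤ p ∧ t = u) ∨
        (s + 2 ≤ i ∧ i ≤ s + p ∧ t = bwd (j + 1) (i - 2))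

/-- The states of the trips of the promotion and of the word match. Positions of the word are
one ahead, cyclically. -/
def Related (N : ℕ) (ph : ℕ → Phase) : TripState → TripState → Prop
  | enter p, t => p < N ∧ t = enter ((p + 1) % N)
  | fwd j i, t => j < N ∧ FwdRelated j i t (ph j)
  | bwd j i, t => j < N ∧ BwdRelated j i t (ph j)
  | exit p, t => t = exit ((p + 1) % N)

/-- `i` is the index, on the stack of the word, of the arc opened at position `0`. -/
def Phase.IsFirstArc : Phase → ℕ → Prop
  | preBump s, i => i = s
  | postBump s p, i => i = s + p
  | shifted s p _, i => 1 ≤ p ∧ i + 1 = s + p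

namespace Comparison

variable {κ κ' : ℕ → Move} {N : ℕ} {ph : ℕ → Phase}

theorem reaches_fwd_of_preBump (h : Comparison κ κ' N ph) {j s : ℕ} (hj : j < N)
    (hs : ph j = preBump s) : Reaches κ (enter 0) (fwd (j + 1) s) := by
  induction j generalizing s with
  | zero =>
    obtain rfl : 0 = s := Phase.preBump.inj (h.zero.symm.trans hs)
    exact .single (by simp [tripStep, h.push_zero])
  | succ j ih =>
    have hstep := h.step j hj
    generalize hm : κ (j + 1) = m, κ' j = m', hq : ph j = q, ph (j + 1) = q' at hstep hs
    cases hstep with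
    | within hw =>
      cases q with
      | preBump s =>
        refine (ih (by omega) hq).tail ?_
        cases m <;> grind [tripStep, Move.ActsWithin, Phase.shared, Phase.withShared]
      | postBump | shifted => cases hs
    | bump | shift | reshift => cases hs

theorem related_fwd (h : Comparison κ κ' N ph) {j i : ℕ} {t : TripState} (hj : j + 1 < N)
    (ht : FwdRelated j i t (ph j)) :
    Related N ph (tripStep κ' (fwd j i)) t ∨
      Related N ph (tripStep κ' (fwd j i)) (tripStep κ t) := by
  have hmod : (j + 1) % N = j + 1 := Nat.mod_eq_of_lt hj
  have hstep := h.step j hj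
  generalize hm : κ (j + 1) = m, hm' : κ' j = m', hq : ph j = q, hq' : ph (j + 1) = q' at hstep ht
  cases hstep with
  | within hw =>
    cases q <;> cases m <;>
      grind [tripStep, Move.ActsWithin, Phase.shared, Phase.withShared, FwdRelated, BwdRelated,
        Related]
  | bump | shift | reshift => grind [tripStep, FwdRelated, BwdRelated, Related]

theorem reaches_exit_of_isFirstArc (h : Comparison κ κ' N ph) {j i : ℕ} (hj : j < N)
    (hi : (ph j).IsFirstArc i) : Reaches κ (bwd (j + 1) i) (exit 0) := by
  induction j generalizing i with
  | zero =>
    rw [h.zero] at hi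
    obtain rfl : i = 0 := hi
    exact .single (by simp [tripStep, h.push_zero])
  | succ j ih =>
    have hstep := h.step j hj
    generalize hm : κ (j + 1) = m, κ' j = m', hq : ph j = q, hq' : ph (j + 1) = q' at hstep hi
    have key : ∃ i', q.IsFirstArc i' ∧ tripStep κ (bwd (j + 1 + 1) i) = bwd (j + 1) i' := by
      simp only [tripStep, hm]
      cases hstep with
      | within hw =>
        cases q with
        | preBump s =>
          exact ⟨s, by cases m <;>
            grind [Move.ActsWithin, Phase.shared, Phase.withShared, Phase.IsFirstArc]⟩
        | postBump s p =>
          exact ⟨s + p, by cases m <;>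
            grind [Move.ActsWithin, Phase.shared, Phase.withShared, Phase.IsFirstArc]⟩
        | shifted s p t =>
          exact ⟨s + p - 1, by cases m <;>
            grind [Move.ActsWithin, Phase.shared, Phase.withShared, Phase.IsFirstArc]⟩
      | bump s => exact ⟨s, by grind [Phase.IsFirstArc]⟩
      | shift s p => exact ⟨s + p, by grind [Phase.IsFirstArc]⟩
      | reshift s p t => exact ⟨s + p, by grind [Phase.IsFirstArc]⟩
    obtain ⟨i', hi', hstep'⟩ := key
    exact .head hstep' (ih (by omega) (hq ▸ hi'))

theorem reaches_exit_of_shifted (h : Comparison κ κ' N ph) {j s : ℕ} {t : TripState} (hj : j < N)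
    (hs : ph j = shifted s 0 t) : Reaches κ t (exit 0) := by
  induction j generalizing s with
  | zero => simp [h.zero] at hs
  | succ j ih =>
    have hstep := h.step j hj
    generalize κ (j + 1) = m, κ' j = m', hq : ph j = q, ph (j + 1) = q' at hstep hs
    cases hstep with
    | within =>
      cases q with
      | preBump | postBump => cases hs
      | shifted s p u =>
        obtain ⟨-, rfl, rfl⟩ := Phase.shifted.inj hs
        exact ih (by omega) hq
    | bump => cases hs
    | shift s p =>
      obtain ⟨-, rfl, rfl⟩ := Phase.shifted.inj hs
      exact h.reaches_exit_of_isFirstArc (by omega) (by simp [hq, Phase.IsFirstArc])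
    | reshift s p u =>
      obtain ⟨-, rfl, rfl⟩ := Phase.shifted.inj hs
      exact h.reaches_exit_of_isFirstArc (by omega) (by simp [hq, Phase.IsFirstArc])

theorem related_bwd_succ (h : Comparison κ κ' N ph) {j i : ℕ} {t : TripState} (hj : j + 1 < N)
    (ht : BwdRelated (j + 1) i t (ph (j + 1))) :
    ∃ t', Reaches κ t t' ∧ Related N ph (tripStep κ' (bwd (j + 1) i)) t' := by
  have hmod : (j + 1) % N = j + 1 := Nat.mod_eq_of_lt hj
  have hstep := h.step j hj
  have hfwd := fun s => h.reaches_fwd_of_preBump (s := s) (j.lt_succ_self.trans hj)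
  generalize hm : κ (j + 1) = m, hm' : κ' j = m', hq : ph j = q, hq' : ph (j + 1) = q' at hstep ht
  cases hstep with
  | within hw =>
    apply exists_reaches_of_or
    cases q with
    | preBump | postBump =>
      cases m <;>
        grind [tripStep, Move.ActsWithin, Phase.shared, Phase.withShared, BwdRelated, Related]
    | shifted =>
      rcases ht with ht | ht | ht | ht <;> cases m <;>
        grind [tripStep, Move.ActsWithin, Phase.shared, Phase.withShared, BwdRelated, Related]
  | bump s =>
    rcases ht with ht | ⟨rfl, rfl⟩ | ht
    · omega
    · exact ⟨exit (j + 1), (hfwd s hq).tail (by simp [tripStep, hm]), by grind [tripStep, Related]⟩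
    · exact ⟨_, reaches_tripStep κ t, by grind [tripStep, BwdRelated, Related]⟩
  | shift | reshift =>
    apply exists_reaches_of_or
    rcases ht with ht | ht | ⟨rfl, ht⟩ | ht <;> grind [tripStep, FwdRelated, BwdRelated, Related]

theorem related_enter (h : Comparison κ κ' N ph) {j : ℕ} (hj : j + 1 < N) :
    Related N ph (tripStep κ' (enter j)) (tripStep κ (enter (j + 1))) := by
  have hstep := h.step j hj
  generalize hm : κ (j + 1) = m, hm' : κ' j = m', hq : ph j = q, hq' : ph (j + 1) = q' at hstep
  cases hstep with
  | within hw =>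
    cases q <;> cases m <;>
      grind [tripStep, Move.ActsWithin, Phase.shared, Phase.withShared, FwdRelated, BwdRelated,
        Related]
  | bump | shift | reshift => grind [tripStep, FwdRelated, BwdRelated, Related]

theorem related_tripStep (h : Comparison κ κ' N ph) {s t : TripState} (hst : Related N ph s t) :
    ∃ t', Reaches κ t t' ∧ Related N ph (tripStep κ' s) t' := by
  obtain ⟨u, hu⟩ := h.last
  cases s with
  | enter p =>
    obtain ⟨hp, rfl⟩ := hst
    rcases (Nat.succ_le_of_lt hp).lt_or_eq with hp' | rfl
    · refine ⟨_, reaches_tripStep κ _, ?_⟩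
      simpa only [Nat.mod_eq_of_lt hp'] using h.related_enter hp'
    · have hpop := h.pop_last
      refine ⟨_, .refl, ?_⟩
      simp_all [tripStep, Related, BwdRelated]
  | fwd j i =>
    obtain ⟨hj, ht⟩ := hst
    rcases (Nat.succ_le_of_lt hj).lt_or_eq with hj' | rfl
    · exact exists_reaches_of_or (h.related_fwd hj' ht)
    · have hpop := h.pop_last
      have hexit := h.reaches_exit_of_shifted hj hu
      refine ⟨exit 0, ?_⟩
      have hmod : (j + 1) % (j + 1) = 0 := Nat.mod_self _
      simp only [Nat.succ_eq_add_one, Nat.add_sub_cancel] at hpop hu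
      rw [hu] at ht
      grind [tripStep, Related, FwdRelated]
  | bwd j i =>
    obtain ⟨hj, ht⟩ := hst
    cases j with
    | zero => grind [h.zero, BwdRelated]
    | succ j => exact h.related_bwd_succ hj ht
  | exit p => exact ⟨t, .refl, hst⟩

theorem reaches_exit_add_one (h : Comparison κ κ' N ph) {p q : ℕ} (hp : p < N)
    (hpq : Reaches κ' (enter p) (exit q)) :
    Reaches κ (enter ((p + 1) % N)) (exit ((q + 1) % N)) := by
  have key : ∀ s, Reaches κ' (enter p) s →
      ∃ t, Reaches κ (enter ((p + 1) % N)) t ∧ Related N ph s t := by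
    intro s hs
    induction hs with
    | refl => exact ⟨_, .refl, hp, rfl⟩
    | tail _ hstep ih =>
      obtain ⟨t, ht, hrel⟩ := ih
      obtain ⟨t', ht', hrel'⟩ := h.related_tripStep hrel
      exact ⟨t', ht.trans ht', hstep ▸ hrel'⟩
  obtain ⟨t, ht, rfl⟩ := key _ hpq
  exact ht

end Comparison

/-! ### Words and promotion -/

section Words

variable {N : ℕ} {a e : ℕ → KLetter} {y : KLetter} {b i j m : ℕ}

/-- The number of occurrences of the letter `y` among the first `j` letters of the word `a`;
words are read as functions on positions numbered from `0`. -/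
def prefixCount (a : ℕ → KLetter) (y : KLetter) (j : ℕ) : ℕ :=
  Nat.count (fun i => a i = y) j

/-- The first `N` letters of `a` form a nonempty Kreweras word. -/
structure IsKreweras (N : ℕ) (a : ℕ → KLetter) : Prop where
  pos : 0 < N
  le : ∀ j ≤ N, ∀ y, prefixCount a y j ≤ prefixCount a A j
  eq : ∀ y, prefixCount a y N = prefixCount a A N

/-- The positions `b` such that the prefix of `a` ending with position `b` contains at least as many
`B`'s as `A`'s, or at least as many `C`'s. -/
def bumpSet (a : ℕ → KLetter) : Set ℕ :=
  {b | ∃ y ≠ A, prefixCount a A (b + 1) ≤ prefixCount a y (b + 1)}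

/-- The `0`-indexed position at which promotion replaces a letter by `A`, that is, one less than
the paper's `ι`. -/
noncomputable def bump (a : ℕ → KLetter) : ℕ :=
  sInf (bumpSet a)

/-- The letter in transit once the first `m` toggles of a promotion have been applied: the initial
`A` travels up to the bump, where it is exchanged for the letter found there. -/
noncomputable def carried (a : ℕ → KLetter) (m : ℕ) : KLetter :=
  if m < bump a then A else a (bump a)

/-- The word after the first `m` toggles of a promotion: the letter in transit sits at position
`m`, and everything before it has moved one place to the left. -/
noncomputable def slide (a : ℕ → KLetter) (m i : ℕ) : KLetter :=
  if i < m then (if i + 1 = bump a then A else a (i + 1)) else if i = m then carried a m else a i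

/-- Promotion of the word of length `N` given by `a`. -/
noncomputable def promote (N : ℕ) (a : ℕ → KLetter) : ℕ → KLetter :=
  slide a (N - 1)

theorem prefixCount_zero : prefixCount a y 0 = 0 :=
  Nat.count_zero _

theorem prefixCount_succ :
    prefixCount a y (j + 1) = prefixCount a y j + if a j = y then 1 else 0 :=
  Nat.count_succ _ _

theorem prefixCount_congr (h : ∀ i < j, a i = e i) : prefixCount a y j = prefixCount e y j := by
  simp only [prefixCount, Nat.count_eq_card_filter_range]
  congr 1
  exact Finset.filter_congr fun i hi => by rw [h i (Finset.mem_range.1 hi)]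

theorem bump_le (hy : y ≠ A) (h : prefixCount a A (b + 1) ≤ prefixCount a y (b + 1)) :
    bump a ≤ b :=
  Nat.sInf_le ⟨y, hy, h⟩

theorem prefixCount_lt_of_le_bump (hy : y ≠ A) (hj : 0 < j) (h : j ≤ bump a) :
    prefixCount a y j < prefixCount a A j := by
  obtain ⟨b, rfl⟩ := Nat.exists_eq_add_of_lt hj
  by_contra! hle
  have := bump_le hy (by simpa using hle)
  omega

theorem IsKreweras.apply_zero (h : IsKreweras N a) : a 0 = A := by
  by_contra hA
  simpa [prefixCount_succ, prefixCount_zero, hA] using h.le 1 h.pos (a 0)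

theorem IsKreweras.pred_mem_bumpSet (h : IsKreweras N a) : N - 1 ∈ bumpSet a :=
  ⟨B, by decide, by rw [Nat.sub_add_cancel h.pos]; exact (h.eq B).ge⟩

theorem IsKreweras.bump_mem_bumpSet (h : IsKreweras N a) : bump a ∈ bumpSet a :=
  Nat.sInf_mem ⟨_, h.pred_mem_bumpSet⟩

theorem IsKreweras.bump_lt (h : IsKreweras N a) : bump a < N :=
  (Nat.sInf_le h.pred_mem_bumpSet).trans_lt (Nat.sub_one_lt h.pos.ne')

theorem IsKreweras.bump_pos (h : IsKreweras N a) : 0 < bump a := by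
  by_contra! h0
  obtain ⟨y, hy, hle⟩ := h.bump_mem_bumpSet
  rw [Nat.le_zero.1 h0] at hle
  simp [prefixCount_succ, prefixCount_zero, h.apply_zero, hy.symm] at hle

theorem IsKreweras.bump_spec (h : IsKreweras N a) :
    a (bump a) ≠ A ∧
      prefixCount a (a (bump a)) (bump a + 1) = prefixCount a A (bump a + 1) := by
  obtain ⟨y, hy, hle⟩ := h.bump_mem_bumpSet
  have hlt := prefixCount_lt_of_le_bump hy h.bump_pos le_rfl
  obtain rfl : a (bump a) = y := by
    by_contra hne
    rw [prefixCount_succ, prefixCount_succ, if_neg hne] at hle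
    omega
  exact ⟨hy, (h.le _ h.bump_lt _).antisymm hle⟩

theorem IsKreweras.bump_le_bump (h : IsKreweras N a) (hae : ∀ i ≤ bump a, a i = e i) :
    bump e ≤ bump a := by
  have hae' : ∀ i < bump a + 1, a i = e i := fun i hi => hae i (Nat.lt_succ_iff.1 hi)
  apply bump_le h.bump_spec.1
  rw [← prefixCount_congr hae', ← prefixCount_congr hae', h.bump_spec.2]

theorem IsKreweras.min_bump_congr (ha : IsKreweras N a) (he : IsKreweras N e)
    (hae : ∀ i < m, a i = e i) : min (bump a) m = min (bump e) m := by
  have hle : bump a < m → bump e ≤ bump a := fun h =>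
    ha.bump_le_bump fun i hi => hae i (hi.trans_lt h)
  have hge : bump e < m → bump a ≤ bump e := fun h =>
    he.bump_le_bump fun i hi => (hae i (hi.trans_lt h)).symm
  omega

theorem IsKreweras.carried_eq_A_iff (h : IsKreweras N a) : carried a m = A ↔ m < bump a := by
  have := h.bump_spec.1
  grind [carried]

theorem slide_self : slide a m m = carried a m := by simp [slide]

theorem slide_of_lt (h : i < m) : slide a m i = if i + 1 = bump a then A else a (i + 1) :=
  if_pos h

theorem slide_of_gt (h : m < i) : slide a m i = a i := by
  rw [slide, if_neg h.not_gt, if_neg h.ne']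

theorem IsKreweras.carried_congr (ha : IsKreweras N a) (he : IsKreweras N e)
    (hae : ∀ i ≤ m, a i = e i) : carried a m = carried e m := by
  have hmin := ha.min_bump_congr he (m := m + 1) fun i hi => hae i (by omega)
  simp only [carried]
  grind

theorem IsKreweras.slide_congr (ha : IsKreweras N a) (he : IsKreweras N e)
    (hae : ∀ i ≤ m, a i = e i) (hi : i ≤ m) : Kreweras.slide a m i = Kreweras.slide e m i := by
  have hmin := ha.min_bump_congr he (m := m + 1) fun i hi => hae i (by omega)
  rcases hi.lt_or_eq with hi | rfl
  · rw [slide_of_lt hi, slide_of_lt hi, hae (i + 1) hi]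
    exact if_congr (by omega) rfl rfl
  · rw [slide_self, slide_self, ha.carried_congr he hae]

theorem promote_of_lt (h : j + 1 < N) :
    promote N a j = if j + 1 = bump a then A else a (j + 1) :=
  slide_of_lt (by omega)

theorem IsKreweras.promote_last (h : IsKreweras N a) : promote N a (N - 1) = a (bump a) := by
  have := h.bump_lt
  rw [promote, slide_self, carried, if_neg (by omega)]

theorem IsKreweras.slide_zero (h : IsKreweras N a) : slide a 0 = a := by
  funext i
  rcases Nat.eq_zero_or_pos i with rfl | hi
  · rw [slide_self, carried, if_pos h.bump_pos, h.apply_zero]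
  · exact slide_of_gt hi

theorem slide_succ : slide a (m + 1) =
    if m + 1 = bump a then slide a m else slide a m ∘ Equiv.swap m (m + 1) := by
  funext i
  split_ifs with hm
  · grind [slide, carried]
  · simp only [Function.comp_apply, Equiv.swap_apply_def]
    grind [slide, carried]

theorem IsKreweras.prefixCount_slide_of_le (h : IsKreweras N a) (hj : j ≤ m) :
    prefixCount a y (j + 1) = prefixCount (slide a m) y j + if carried a j = y then 1 else 0 := by
  have hpos := h.bump_pos
  induction j with
  | zero => simp [prefixCount_succ, prefixCount_zero, h.apply_zero, carried, hpos]
  | succ j ih =>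
    rw [prefixCount_succ, ih (by omega), prefixCount_succ, slide_of_lt (by omega)]
    grind [carried]

theorem IsKreweras.prefixCount_slide_of_gt (h : IsKreweras N a) (hj : m < j) :
    prefixCount (slide a m) y j = prefixCount a y j := by
  induction j, hj using Nat.le_induction with
  | base => rw [prefixCount_succ, h.prefixCount_slide_of_le le_rfl, slide_self]
  | succ j hj ih => rw [prefixCount_succ, ih, slide_of_gt hj, ← prefixCount_succ]

theorem IsKreweras.slide (h : IsKreweras N a) (hm : m < N) : IsKreweras N (slide a m) where
  pos := h.pos
  le j hj y := by
    rcases lt_or_ge m j with hmj | hjm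
    · simpa only [h.prefixCount_slide_of_gt hmj] using h.le j hj y
    · have hy := h.prefixCount_slide_of_le (y := y) hjm
      have hA := h.prefixCount_slide_of_le (y := A) hjm
      have hlt : y ≠ A → j < bump a → prefixCount a y (j + 1) < prefixCount a A (j + 1) :=
        fun hy hj => prefixCount_lt_of_le_bump hy j.succ_pos hj
      have hle := h.le (j + 1) (by omega) y
      have hcar := h.carried_eq_A_iff (m := j)
      grind
  eq y := by simpa only [h.prefixCount_slide_of_gt hm] using h.eq y

theorem IsKreweras.promote (h : IsKreweras N a) : IsKreweras N (promote N a) :=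
  h.slide (Nat.sub_one_lt h.pos.ne')

theorem IsKreweras.iterate_promote (h : IsKreweras N a) (k : ℕ) :
    IsKreweras N ((Kreweras.promote N)^[k] a) := by
  induction k with
  | zero => exact h
  | succ k ih => rw [Function.iterate_succ_apply']; exact ih.promote

theorem IsKreweras.not_isKreweras_swap (h : IsKreweras N a) (hm : m + 1 = bump a) :
    ¬ IsKreweras N (Kreweras.slide a m ∘ Equiv.swap m (m + 1)) := by
  intro hsw
  obtain ⟨hne, htight⟩ := h.bump_spec
  have hlt := h.bump_lt
  set x := a (bump a)
  have hprefix : ∀ y, prefixCount (Kreweras.slide a m ∘ Equiv.swap m (m + 1)) y m =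
      prefixCount (Kreweras.slide a m) y m := fun y =>
    prefixCount_congr fun i hi => by
      rw [Function.comp_apply, Equiv.swap_apply_of_ne_of_ne (by omega) (by omega)]
  have hle := hsw.le (m + 1) (by omega) x
  have hcx := h.prefixCount_slide_of_le (y := x) (le_refl m)
  have hcA := h.prefixCount_slide_of_le (y := A) (le_refl m)
  simp only [prefixCount_succ, hprefix, Function.comp_apply, Equiv.swap_apply_left,
    slide_of_gt (Nat.lt_succ_self m), carried, ← hm, Nat.lt_succ_self, if_true]
    at hle hcx hcA htight
  grind

end Words

/-! ### Stacks of open arcs -/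

section Stack

variable {l x y s : KLetter} {T U V : List KLetter}

theorem negL_negL (l : KLetter) : negL (negL l) = l := by cases l <;> rfl

theorem negL_ne_self (hl : l ≠ A) : negL l ≠ l := by cases l <;> simp_all [negL]

theorem negL_ne_A (hl : l ≠ A) : negL l ≠ A := by cases l <;> simp_all [negL]

theorem eq_negL (hl : l ≠ A) (hsl : s ≠ l) (hsA : s ≠ A) : s = negL l := by
  cases l <;> cases s <;> simp_all [negL]

/-- A stack of open arcs, outermost arc last: an entry `A` stands for an `A` of the word that still
awaits both a `B` and a `C`, any other entry for an `A` that still awaits that one letter.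
`arcIdx l T` is the index of the innermost open arc that can receive the letter `l`. -/
def arcIdx (l : KLetter) (T : List KLetter) : ℕ :=
  T.findIdx fun s => s = l ∨ s = A

/-- The letter `l` can be read on the stack `T`: it opens an arc, or some open arc awaits it. -/
def Accepts (l : KLetter) (T : List KLetter) : Prop :=
  l = A ∨ l ∈ T ∨ A ∈ T

/-- The move of the open arcs caused by reading the letter `l` on the stack `T`. -/
def moveOf (l : KLetter) (T : List KLetter) : Move :=
  if l = A then push
  else if T[arcIdx l T]? = some A then turn (arcIdx l T) else pop (arcIdx l T)

/-- The stack of open arcs obtained from `T` by reading the letter `l`. -/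
def readLetter (l : KLetter) (T : List KLetter) : List KLetter :=
  match moveOf l T with
  | push => A :: T
  | turn d => T.set d (negL l)
  | pop d => T.eraseIdx d

theorem accepts_of_count_pos (h : 0 < T.count l + T.count A) : Accepts l T := by
  by_contra hno
  simp only [Accepts, not_or] at hno
  rw [List.count_eq_zero_of_not_mem hno.2.1, List.count_eq_zero_of_not_mem hno.2.2] at h
  exact h.false

theorem Accepts.arcIdx_lt (h : Accepts l T) (hl : l ≠ A) : arcIdx l T < T.length := by
  simp only [arcIdx, List.findIdx_lt_length]
  rcases h.resolve_left hl with h | h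
  · exact ⟨l, h, by simp⟩
  · exact ⟨A, h, by simp⟩

theorem Accepts.arcIdx_append (h : Accepts l T) (hl : l ≠ A) (U : List KLetter) :
    arcIdx l (T ++ U) = arcIdx l T := by
  rw [arcIdx, List.findIdx_append]
  exact if_pos (h.arcIdx_lt hl)

theorem Accepts.moveOf_append (h : Accepts l T) (U : List KLetter) :
    moveOf l (T ++ U) = moveOf l T := by
  by_cases hl : l = A
  · simp [moveOf, hl]
  · simp [moveOf, h.arcIdx_append hl, List.getElem?_append_left (h.arcIdx_lt hl)]

theorem Accepts.actsWithin (h : Accepts l T) :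
    (moveOf l T).ActsWithin T.length (readLetter l T).length := by
  by_cases hl : l = A
  · simp [readLetter, moveOf, hl, Move.ActsWithin]
  · have hlt := h.arcIdx_lt hl
    rw [readLetter, moveOf, if_neg hl]
    split_ifs
    · exact ⟨hlt, List.length_set⟩
    · exact ⟨hlt, List.length_eraseIdx_add_one hlt⟩

theorem Accepts.readLetter_append (h : Accepts l T) (U : List KLetter) :
    readLetter l (T ++ U) = readLetter l T ++ U := by
  have hact := h.actsWithin
  rw [readLetter, h.moveOf_append, readLetter]
  cases hm : moveOf l T <;> rw [hm] at hact
  · rfl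
  · exact List.set_append_left _ _ hact.1
  · exact List.eraseIdx_append_of_lt_length hact.1 _

theorem Accepts.count_readLetter (h : Accepts l T) (hy : y ≠ A) :
    (readLetter l T).count y + (readLetter l T).count A + (if l = y then 1 else 0) =
      T.count y + T.count A + if l = A then 1 else 0 := by
  by_cases hl : l = A
  · simp [readLetter, moveOf, hl, hy.symm, add_assoc]
  · have hlt := h.arcIdx_lt hl
    have hyl : y = l ∨ y = negL l := or_iff_not_imp_left.2 fun hyl => eq_negL hl hyl hy
    have hT := fun z => (List.getElem_cons_eraseIdx_perm hlt).count_eq z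
    have hor : T[arcIdx l T] = l ∨ T[arcIdx l T] = A :=
      of_decide_eq_true (List.findIdx_getElem (w := hlt))
    have hne := negL_ne_self hl
    have hnA := negL_ne_A hl
    simp only [readLetter, moveOf, if_neg hl, List.getElem?_eq_getElem hlt, Option.some.injEq]
    grind

theorem eq_replicate_of_not_accepts (h : ¬ Accepts l T) :
    T = List.replicate T.length (negL l) := by
  simp only [Accepts, not_or] at h
  refine List.eq_replicate_iff.2 ⟨rfl, fun s hs => eq_negL h.1 ?_ ?_⟩
  · rintro rfl; exact h.2.1 hs
  · rintro rfl; exact h.2.2 hs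

theorem arcIdx_append_cons_of_not_accepts (h : ¬ Accepts l T) (hs : s = l ∨ s = A)
    (U : List KLetter) : arcIdx l (T ++ s :: U) = T.length := by
  simp only [Accepts, not_or] at h
  have hT : ¬ T.findIdx (fun s => s = l ∨ s = A) < T.length := by
    rw [List.findIdx_lt_length]
    rintro ⟨t, ht, hor⟩
    rcases of_decide_eq_true hor with rfl | rfl
    exacts [h.2.1 ht, h.2.2 ht]
  rw [arcIdx, List.findIdx_append, if_neg hT, List.findIdx_cons]
  simp [hs]

theorem moveOf_append_A_of_not_accepts (h : ¬ Accepts l T) (U : List KLetter) :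
    moveOf l (T ++ A :: U) = turn T.length := by
  rw [moveOf, if_neg (not_or.1 h).1, arcIdx_append_cons_of_not_accepts h (Or.inr rfl)]
  simp

theorem moveOf_append_self_of_not_accepts (h : ¬ Accepts l T) (U : List KLetter) :
    moveOf l (T ++ l :: U) = pop T.length := by
  have hl := (not_or.1 h).1
  rw [moveOf, if_neg hl, arcIdx_append_cons_of_not_accepts h (Or.inl rfl)]
  simp [hl]

theorem readLetter_append_A_of_not_accepts (h : ¬ Accepts l T) (U : List KLetter) :
    readLetter l (T ++ A :: U) = T ++ negL l :: U := by
  simp [readLetter, moveOf_append_A_of_not_accepts h]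

theorem readLetter_append_self_of_not_accepts (h : ¬ Accepts l T) (U : List KLetter) :
    readLetter l (T ++ l :: U) = T ++ U := by
  simp [readLetter, moveOf_append_self_of_not_accepts h, List.eraseIdx_append_of_length_le]

end Stack

section WordStack

variable {N : ℕ} {a : ℕ → KLetter} {y : KLetter} {j : ℕ}

/-- The stack of open arcs after reading the first `j` letters of `a`. -/
def stack (a : ℕ → KLetter) : ℕ → List KLetter
  | 0 => []
  | j + 1 => readLetter (a j) (stack a j)

/-- The move of the open arcs caused by reading the letter of `a` at position `j`. -/
def move (a : ℕ → KLetter) (j : ℕ) : Move :=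
  moveOf (a j) (stack a j)

theorem IsKreweras.accepts_of_count_stack (h : IsKreweras N a) (hj : j < N)
    (hcount : ∀ y ≠ A,
      (stack a j).count y + (stack a j).count A + prefixCount a y j = prefixCount a A j) :
    Accepts (a j) (stack a j) := by
  by_cases hA : a j = A
  · exact Or.inl hA
  · apply accepts_of_count_pos
    have hle := h.le (j + 1) hj (a j)
    rw [prefixCount_succ, prefixCount_succ, if_pos rfl, if_neg hA] at hle
    have := hcount (a j) hA
    omega

theorem IsKreweras.count_stack (h : IsKreweras N a) (hj : j ≤ N) (hy : y ≠ A) :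
    (stack a j).count y + (stack a j).count A + prefixCount a y j = prefixCount a A j := by
  induction j generalizing y with
  | zero => simp [stack, prefixCount_zero]
  | succ j ih =>
    have hacc := h.accepts_of_count_stack hj fun y hy => ih (by omega) hy
    have hread := hacc.count_readLetter hy
    have := ih (by omega) hy
    rw [stack, prefixCount_succ, prefixCount_succ]
    omega

theorem IsKreweras.accepts (h : IsKreweras N a) (hj : j < N) : Accepts (a j) (stack a j) :=
  h.accepts_of_count_stack hj fun _ => h.count_stack hj.le

theorem IsKreweras.stack_eq_nil (h : IsKreweras N a) : stack a N = [] := by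
  have hcount : ∀ y ≠ A, (stack a N).count y + (stack a N).count A = 0 := fun y hy => by
    have := h.count_stack le_rfl hy
    have := h.eq y
    omega
  refine List.eq_nil_iff_forall_not_mem.2 fun s hs => ?_
  have hpos := List.count_pos_iff.2 hs
  have hB := hcount B (by decide)
  have hC := hcount C (by decide)
  cases s <;> omega

end WordStack

/-! ### Comparison of a word with its promotion -/

section Shape

variable {N : ℕ} {a : ℕ → KLetter} {x : KLetter} {T : List KLetter} {ph : Phase}
  {m : Move} {j s p : ℕ} {t : TripState}

/-- The arcs of the original word beyond the shared ones; `x` is the letter at the bump. -/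
def Phase.tail (x : KLetter) : Phase → List KLetter
  | preBump _ => [A]
  | postBump _ p => List.replicate (p + 1) (negL x)
  | shifted _ p _ => List.replicate p (negL x)

/-- The arcs of the promoted word beyond the shared ones; `x` is the letter at the bump. -/
def Phase.promotedTail (x : KLetter) : Phase → List KLetter
  | preBump _ => []
  | postBump _ p => A :: List.replicate p (negL x)
  | shifted _ p _ => x :: List.replicate p (negL x)

/-- The phase `ph` describes the stacks of `a` and of its promotion on the two sides of the letter
`a (j + 1)`, which promotion moves to position `j`; `T` is the part shared by both stacks. -/
structure Shape (N : ℕ) (a : ℕ → KLetter) (j : ℕ) (T : List KLetter) (ph : Phase) : Prop where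
  length_eq : T.length = ph.shared
  stack_eq : stack a (j + 1) = T ++ ph.tail (a (bump a))
  stack_promote_eq : stack (promote N a) j = T ++ ph.promotedTail (a (bump a))
  lt_bump_iff : j < bump a ↔ ∃ s, ph = preBump s

theorem Shape.zero (h : IsKreweras N a) : Shape N a 0 [] (preBump 0) where
  length_eq := rfl
  stack_eq := by simp [stack, readLetter, moveOf, h.apply_zero, Phase.tail]
  stack_promote_eq := rfl
  lt_bump_iff := iff_of_true h.bump_pos ⟨0, rfl⟩

theorem Shape.count_of_preBump (h : IsKreweras N a) (hj : j < N)
    (hs : Shape N a j T (preBump s)) (hx : x ≠ A) :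
    T.count x + T.count A + 1 + prefixCount a x (j + 1) = prefixCount a A (j + 1) := by
  have := h.count_stack (j := j + 1) hj hx
  simp only [hs.stack_eq, Phase.tail, List.count_append, List.count_singleton_self,
    List.count_singleton, beq_eq_false_iff_ne.2 hx.symm] at this
  grind

theorem Shape.exists_step_of_accepts (hj : j + 1 < N) (hb : j + 1 ≠ bump a)
    (hs : Shape N a j T ph) (hacc : Accepts (a (j + 1)) T) :
    ∃ ph' T', PhaseStep j (move a (j + 1)) (move (promote N a) j) ph ph' ∧
      Shape N a (j + 1) T' ph' := by
  have hpro : promote N a j = a (j + 1) := by rw [promote_of_lt hj, if_neg hb]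
  set T' := readLetter (a (j + 1)) T
  refine ⟨ph.withShared T'.length, T', ?_, ?_, ?_, ?_, ?_⟩
  · rw [move, move, hs.stack_eq, hs.stack_promote_eq, hpro, hacc.moveOf_append, hacc.moveOf_append]
    exact .within (hs.length_eq ▸ hacc.actsWithin)
  · cases ph <;> rfl
  · rw [stack, hs.stack_eq, hacc.readLetter_append]
    cases ph <;> rfl
  · rw [stack, hs.stack_promote_eq, hpro, hacc.readLetter_append]
    cases ph <;> rfl
  · have hlt : j + 1 < bump a ↔ j < bump a := by omega
    rw [hlt, hs.lt_bump_iff]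
    cases ph <;> simp [Phase.withShared]

theorem Shape.exists_step_of_eq_bump (h : IsKreweras N a) (hj : j + 1 < N) (hb : j + 1 = bump a)
    (hs : Shape N a j T ph) :
    ∃ ph' T', PhaseStep j (move a (j + 1)) (move (promote N a) j) ph ph' ∧
      Shape N a (j + 1) T' ph' := by
  obtain ⟨s, rfl⟩ := hs.lt_bump_iff.1 (by omega)
  obtain ⟨hx, htight⟩ := h.bump_spec
  have hcount := hs.count_of_preBump h (by omega) hx
  have hjx : a (j + 1) = a (bump a) := by rw [hb]
  simp only [← hb, prefixCount_succ (j := j + 1), hjx, if_true, if_neg hx] at htight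
  have hno : ¬ Accepts (a (bump a)) T := fun hacc => by
    have := List.count_pos_iff (l := T) (a := a (bump a))
    have := List.count_pos_iff (l := T) (a := A)
    rcases hacc.resolve_left hx with hmem | hmem <;> grind
  have hrep := eq_replicate_of_not_accepts hno
  have hpro : promote N a j = A := by rw [promote_of_lt hj, if_pos hb]
  have htail : T ++ [negL (a (bump a))] = List.replicate (T.length + 1) (negL (a (bump a))) := by
    rw [List.replicate_succ', ← hrep]
  refine ⟨postBump 0 T.length, [], ?_, rfl, ?_, ?_, ?_⟩
  · have hpush : move (promote N a) j = push := by rw [move, hpro, moveOf, if_pos rfl]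
    have hturn : move a (j + 1) = turn T.length := by
      rw [move, hs.stack_eq, hjx]
      exact moveOf_append_A_of_not_accepts hno []
    rw [hpush, hturn, hs.length_eq]
    exact .bump s
  · rw [stack, hs.stack_eq, hjx, Phase.tail, readLetter_append_A_of_not_accepts hno, htail]
    rfl
  · rw [stack, hs.stack_promote_eq, hpro, Phase.promotedTail, Phase.promotedTail, ← hrep,
      List.append_nil]
    rfl
  · exact iff_of_false (by omega) (by simp)

theorem Shape.eq_negL_of_not_accepts (h : IsKreweras N a) (hj : j + 1 < N) (hb : j + 1 ≠ bump a)
    (hs : Shape N a j T ph) (hno : ¬ Accepts (a (j + 1)) T) :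
    a (j + 1) = negL (a (bump a)) ∧ bump a ≤ j := by
  have hA := (not_or.1 hno).1
  have hge : bump a ≤ j := by
    by_contra! hlt
    obtain ⟨s, rfl⟩ := hs.lt_bump_iff.1 hlt
    have hcount := hs.count_of_preBump h (by omega) hA
    have hlt := prefixCount_lt_of_le_bump (a := a) hA (j := j + 2) (by omega) (by omega)
    rw [prefixCount_succ (j := j + 1), prefixCount_succ (j := j + 1), if_pos rfl, if_neg hA] at hlt
    exact hno (accepts_of_count_pos (by omega))
  refine ⟨?_, hge⟩
  have hx := negL_ne_A h.bump_spec.1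
  have hacc := h.accepts hj
  rw [hs.stack_eq] at hacc
  cases ph with
  | preBump s => exact absurd (hs.lt_bump_iff.2 ⟨s, rfl⟩) hge.not_gt
  | postBump s p => grind [Accepts, Phase.tail]
  | shifted s p t => grind [Accepts, Phase.tail]

theorem Shape.exists_step_of_postBump (hj : j + 1 < N) (hb : bump a ≤ j)
    (hlx : a (j + 1) = negL (a (bump a))) (hs : Shape N a j T (postBump s p))
    (hno : ¬ Accepts (a (j + 1)) T) :
    PhaseStep j (move a (j + 1)) (move (promote N a) j) (postBump s p)
        (shifted s p (bwd (j + 1) s)) ∧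
      Shape N a (j + 1) T (shifted s p (bwd (j + 1) s)) := by
  have hpro : promote N a j = a (j + 1) := by rw [promote_of_lt hj, if_neg (by omega)]
  obtain ⟨rfl, hstack, hstack', -⟩ := hs
  rw [Phase.tail, List.replicate_succ, ← hlx] at hstack
  refine ⟨?_, rfl, ?_, ?_, iff_of_false (by omega) (by simp)⟩
  · rw [move, move, hpro, hstack, hstack', moveOf_append_self_of_not_accepts hno,
      Phase.promotedTail, moveOf_append_A_of_not_accepts hno]
    exact .shift _ _
  · rw [stack, hstack, readLetter_append_self_of_not_accepts hno, hlx, Phase.tail]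
  · rw [stack, hpro, hstack', Phase.promotedTail, readLetter_append_A_of_not_accepts hno, hlx,
      negL_negL, Phase.promotedTail]

theorem Shape.exists_step_of_shifted (hj : j + 1 < N) (hb : bump a ≤ j)
    (hlx : a (j + 1) = negL (a (bump a))) (hs : Shape N a j T (shifted s (p + 1) t))
    (hno : ¬ Accepts (a (j + 1)) T) :
    PhaseStep j (move a (j + 1)) (move (promote N a) j) (shifted s (p + 1) t)
        (shifted s p (bwd (j + 1) s)) ∧
      Shape N a (j + 1) T (shifted s p (bwd (j + 1) s)) := by
  have hpro : promote N a j = a (j + 1) := by rw [promote_of_lt hj, if_neg (by omega)]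
  have hA := (not_or.1 hno).1
  obtain ⟨rfl, hstack, hstack', -⟩ := hs
  set x := a (bump a)
  have hno' : ¬ Accepts (a (j + 1)) (T ++ [x]) := by
    have hxl : x = negL (a (j + 1)) := by rw [hlx, negL_negL]
    have := negL_ne_self hA
    have := negL_ne_A hA
    grind [Accepts]
  rw [Phase.tail, List.replicate_succ, ← hlx] at hstack
  have hstack' : stack (promote N a) j = (T ++ [x]) ++ a (j + 1) :: List.replicate p (negL x) := by
    simp [hstack', Phase.promotedTail, List.replicate_succ, hlx]
  refine ⟨?_, rfl, ?_, ?_, iff_of_false (by omega) (by simp)⟩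
  · rw [move, move, hpro, hstack, hstack', moveOf_append_self_of_not_accepts hno,
      moveOf_append_self_of_not_accepts hno', List.length_append]
    exact .reshift _ _ _
  · rw [stack, hstack, readLetter_append_self_of_not_accepts hno, hlx, Phase.tail]
  · rw [stack, hpro, hstack', readLetter_append_self_of_not_accepts hno', Phase.promotedTail,
      List.append_assoc, List.singleton_append]

theorem Shape.exists_step (h : IsKreweras N a) (hj : j + 1 < N) (hs : Shape N a j T ph) :
    ∃ ph' T', PhaseStep j (move a (j + 1)) (move (promote N a) j) ph ph' ∧
      Shape N a (j + 1) T' ph' := by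
  by_cases hb : j + 1 = bump a
  · exact hs.exists_step_of_eq_bump h hj hb
  by_cases hacc : Accepts (a (j + 1)) T
  · exact hs.exists_step_of_accepts hj hb hacc
  obtain ⟨hlx, hge⟩ := hs.eq_negL_of_not_accepts h hj hb hacc
  cases ph with
  | preBump s => exact absurd (hs.lt_bump_iff.2 ⟨s, rfl⟩) hge.not_gt
  | postBump s p => exact ⟨_, _, hs.exists_step_of_postBump hj hge hlx hacc⟩
  | shifted s p t =>
    cases p with
    | zero =>
      have hstack := hs.stack_eq
      rw [Phase.tail, List.replicate_zero, List.append_nil] at hstack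
      exact absurd (hstack ▸ h.accepts hj) hacc
    | succ p => exact ⟨_, _, hs.exists_step_of_shifted hj hge hlx hacc⟩

theorem Shape.last (h : IsKreweras N a) (hs : Shape N a (N - 1) T ph) :
    ∃ t, ph = shifted 0 0 t ∧ stack (promote N a) (N - 1) = [a (bump a)] := by
  obtain ⟨hlen, hstack, hstack', -⟩ := hs
  rw [Nat.sub_add_cancel h.pos, h.stack_eq_nil, eq_comm, List.append_eq_nil_iff] at hstack
  obtain ⟨rfl, htail⟩ := hstack
  cases ph with
  | preBump s => simp [Phase.tail] at htail
  | postBump s p => simp [Phase.tail] at htail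
  | shifted s p t =>
    obtain rfl : p = 0 := by simpa [Phase.tail] using htail
    obtain rfl : 0 = s := hlen
    exact ⟨t, rfl, hstack'⟩

theorem exists_seq_of_exists_step {α : Type*} {P : ℕ → α → Prop} {R : ℕ → α → α → Prop} {z : α}
    (hz : P 0 z) (hstep : ∀ j, j + 1 < N → ∀ u, P j u → ∃ v, R j u v ∧ P (j + 1) v) :
    ∃ f : ℕ → α, f 0 = z ∧ (∀ j < N, P j (f j)) ∧ ∀ j, j + 1 < N → R j (f j) (f (j + 1)) := by
  have htotal : ∀ j u, ∃ v, j + 1 < N → P j u → R j u v ∧ P (j + 1) v := fun j u => by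
    by_cases h : j + 1 < N ∧ P j u
    · obtain ⟨v, hv⟩ := hstep j h.1 u h.2
      exact ⟨v, fun _ _ => hv⟩
    · exact ⟨u, fun hj hu => absurd ⟨hj, hu⟩ h⟩
  choose next hnext using htotal
  let f : ℕ → α := fun j => Nat.rec z next j
  have hP : ∀ j < N, P j (f j) := by
    intro j
    induction j with
    | zero => exact fun _ => hz
    | succ j ih => exact fun hj => (hnext j (f j) hj (ih (by omega))).2
  exact ⟨f, rfl, hP, fun j hj => (hnext j (f j) hj (hP j (by omega))).1⟩

theorem IsKreweras.exists_comparison (h : IsKreweras N a) :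
    ∃ ph, Comparison (move a) (move (Kreweras.promote N a)) N ph ∧
      ∀ j < N, (j < bump a ↔ ∃ s, ph j = preBump s) := by
  obtain ⟨ph, hzero, hshape, hstep⟩ := exists_seq_of_exists_step (N := N)
    (P := fun j ph => ∃ T, Shape N a j T ph)
    (R := fun j => PhaseStep j (move a (j + 1)) (move (Kreweras.promote N a) j))
    ⟨[], Shape.zero h⟩ fun j hj u ⟨T, hT⟩ => by
      obtain ⟨v, T', hR, hT'⟩ := hT.exists_step h hj
      exact ⟨v, hR, T', hT'⟩
  obtain ⟨T, hT⟩ := hshape (N - 1) (Nat.sub_one_lt h.pos.ne')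
  obtain ⟨t, hlast, hstack⟩ := hT.last h
  refine ⟨ph, ⟨hzero, hstep, ?_, ⟨t, hlast⟩, ?_⟩, fun j hj => (hshape j hj).elim fun _ hs =>
    hs.lt_bump_iff⟩
  · rw [move, h.apply_zero, moveOf, if_pos rfl]
  · have hno : ¬ Accepts (a (bump a)) [] := by simp [Accepts, h.bump_spec.1]
    rw [move, hstack, h.promote_last]
    exact moveOf_append_self_of_not_accepts hno []

theorem IsKreweras.reaches_exit_bump (h : IsKreweras N a) :
    Reaches (move a) (enter 0) (exit (bump a)) := by
  obtain ⟨ph, hcomp, hlt⟩ := h.exists_comparison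
  have hbump := h.bump_lt
  obtain ⟨j, hj⟩ : ∃ j, bump a = j + 1 := Nat.exists_eq_succ_of_ne_zero h.bump_pos.ne'
  obtain ⟨s, hs⟩ := (hlt j (by omega)).1 (by omega)
  have hstep := hcomp.step j (by omega)
  have hpost : ∀ s, ph (j + 1) ≠ preBump s := fun s hs => by
    have := (hlt (j + 1) (by omega)).2 ⟨s, hs⟩
    omega
  have hturn : move a (j + 1) = turn s := by
    rw [hs] at hstep
    generalize hq : (preBump s : Phase) = q, move a (j + 1) = m,
      move (Kreweras.promote N a) j = m', ph (j + 1) = q' at hstep hpost ⊢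
    cases hstep with
    | within =>
      subst hq
      exact absurd rfl (hpost _)
    | bump => exact congrArg turn (Phase.preBump.inj hq).symm
    | shift | reshift => cases hq
  refine (hcomp.reaches_fwd_of_preBump (by omega) hs).tail ?_
  simp [tripStep, hturn, hj]

end Shape

/-! ### Rotation of trips -/

section Promotion

variable {N : ℕ} {a : ℕ → KLetter} {i k p q t u : ℕ}

theorem IsKreweras.reaches_of_iterate_promote (h : IsKreweras N a) (hp : p < N) (hq : q < N)
    (hpq : Reaches (move ((Kreweras.promote N)^[k] a)) (enter p) (exit q)) :
    Reaches (move a) (enter ((p + k) % N)) (exit ((q + k) % N)) := by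
  induction k generalizing a with
  | zero => simpa [Nat.mod_eq_of_lt hp, Nat.mod_eq_of_lt hq] using hpq
  | succ k ih =>
    obtain ⟨ph, hcomp, -⟩ := h.exists_comparison
    have hstep := hcomp.reaches_exit_add_one (Nat.mod_lt _ h.pos) (ih h.promote hpq)
    simpa only [Nat.mod_add_mod, add_assoc] using hstep

theorem IsKreweras.bump_iterate_promote_length (h : IsKreweras N a) :
    bump ((Kreweras.promote N)^[N] a) = bump a := by
  have hlt := (h.iterate_promote N).bump_lt
  have hreach := h.reaches_of_iterate_promote h.pos hlt (h.iterate_promote N).reaches_exit_bump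
  rw [zero_add, Nat.mod_self, Nat.add_mod_right, Nat.mod_eq_of_lt hlt] at hreach
  exact hreach.exit_unique h.reaches_exit_bump

/-- The letter at the absolute position `q` after `t` promotions, each of which moves the word one
place to the right: its letters then occupy the absolute positions `t, …, t + N - 1`. -/
noncomputable def letterAt (N : ℕ) (a : ℕ → KLetter) (t q : ℕ) : KLetter :=
  (promote N)^[t] a (q - t)

/-- The absolute position of the bump of the promotion performed at time `t`; reduced modulo `N`
it is the value `σ_w(t + 1) - 1` of the trip permutation. -/
noncomputable def bumpAt (N : ℕ) (a : ℕ → KLetter) (t : ℕ) : ℕ :=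
  bump ((promote N)^[t] a) + t

theorem letterAt_succ (htq : t < q) (hq : q < t + N) :
    letterAt N a (t + 1) q = if bumpAt N a t = q then A else letterAt N a t q := by
  rw [letterAt, Function.iterate_succ_apply', promote_of_lt (by omega), bumpAt, letterAt,
    show q - (t + 1) + 1 = q - t by omega]
  exact if_congr (by omega) rfl rfl

theorem letterAt_zero : letterAt N a 0 q = a q := rfl

theorem letterAt_bumpAt :
    letterAt N a t (bumpAt N a t) = (promote N)^[t] a (bump ((promote N)^[t] a)) := by
  rw [letterAt, bumpAt, Nat.add_sub_cancel]

theorem IsKreweras.letterAt_self (h : IsKreweras N a) : letterAt N a q q = A := by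
  rw [letterAt, Nat.sub_self, (h.iterate_promote q).apply_zero]

theorem letterAt_eq_A_of_le (htu : t ≤ u) (huq : u ≤ q) (hq : q < t + N)
    (hA : letterAt N a t q = A) : letterAt N a u q = A := by
  induction u, htu using Nat.le_induction with
  | base => exact hA
  | succ u htu ih => rw [letterAt_succ huq (by omega), ih (by omega), ite_self]

theorem letterAt_eq_of_ne_A (htu : t ≤ u) (huq : u ≤ q) (hq : q < t + N)
    (hA : letterAt N a u q ≠ A) : letterAt N a u q = letterAt N a t q := by
  induction u, htu using Nat.le_induction with
  | base => rfl
  | succ u htu ih =>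
    rw [letterAt_succ huq (by omega)] at hA ⊢
    split_ifs at hA ⊢ with hbump
    · exact absurd rfl hA
    · exact ih (by omega) hA

theorem exists_bumpAt_eq (htu : t ≤ u) (huq : u ≤ q) (hq : q < t + N)
    (ht : letterAt N a t q ≠ A) (hu : letterAt N a u q = A) : ∃ i < u, bumpAt N a i = q := by
  induction u, htu using Nat.le_induction with
  | base => exact absurd hu ht
  | succ u htu ih =>
    rw [letterAt_succ huq (by omega)] at hu
    split_ifs at hu with hbump
    · exact ⟨u, u.lt_succ_self, hbump⟩
    · obtain ⟨i, hi, hiq⟩ := ih (by omega) hu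
      exact ⟨i, by omega, hiq⟩

theorem IsKreweras.bumpAt_injective (h : IsKreweras N a) : Function.Injective (bumpAt N a) := by
  refine .of_lt_imp_ne fun k i hki heq => ?_
  have hpos := (h.iterate_promote k).bump_pos
  have hlt := (h.iterate_promote k).bump_lt
  have hq : bumpAt N a k = bump ((Kreweras.promote N)^[k] a) + k := rfl
  have hi : bumpAt N a i = bump ((Kreweras.promote N)^[i] a) + i := rfl
  have hA : letterAt N a (k + 1) (bumpAt N a k) = A := by
    rw [letterAt_succ (by omega) (by omega), if_pos rfl]
  have hA' := letterAt_eq_A_of_le (u := i) hki (by omega) (by omega) hA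
  rw [heq, letterAt_bumpAt] at hA'
  exact (h.iterate_promote i).bump_spec.1 hA'

theorem IsKreweras.bumpAt_add_length (h : IsKreweras N a) :
    bumpAt N a (i + N) = bumpAt N a i + N := by
  rw [bumpAt, add_comm i N, Function.iterate_add_apply,
    (h.iterate_promote i).bump_iterate_promote_length, bumpAt]
  omega

theorem IsKreweras.carried_iterate_promote (h : IsKreweras N a) (hk : k < N) :
    carried ((Kreweras.promote N)^[k] a) (N - 1 - k) = a (bumpAt N a k % N) := by
  have hlt := (h.iterate_promote k).bump_lt
  have hbumpAt : bumpAt N a k = bump ((Kreweras.promote N)^[k] a) + k := rfl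
  rcases lt_or_ge (bumpAt N a k) N with hwrap | hwrap
  · have hne : letterAt N a k (bumpAt N a k) ≠ A :=
      letterAt_bumpAt ▸ (h.iterate_promote k).bump_spec.1
    rw [carried, if_neg (by omega), Nat.mod_eq_of_lt hwrap, ← letterAt_bumpAt,
      letterAt_eq_of_ne_A k.zero_le (by omega) (by omega) hne, letterAt_zero]
  · rw [carried, if_pos (by omega), Nat.mod_eq_sub_mod hwrap, Nat.mod_eq_of_lt (by omega)]
    by_contra hA
    -- A letter bumped before reaching the origin would be bumped a second time by periodicity.
    obtain ⟨i, -, hi⟩ := exists_bumpAt_eq (N := N) (a := a) (bumpAt N a k - N).zero_le le_rfl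
      (by omega) (Ne.symm hA) h.letterAt_self
    have hik : i + N = k := h.bumpAt_injective (by rw [h.bumpAt_add_length]; omega)
    omega

end Promotion

/-! ### Toggles and evacuation -/

section Lists

variable {N n : ℕ} {a e : ℕ → KLetter} {y : KLetter} {i j k m : ℕ}

/-- The list of the first `N` letters of `a`, through which words on lists are read as functions. -/
def toList (N : ℕ) (a : ℕ → KLetter) : List KLetter :=
  (List.range N).map a

theorem length_toList : (toList N a).length = N := by
  simp [toList]

theorem getElem?_toList : (toList N a)[i]? = if i < N then some (a i) else none := by
  split_ifs with hi <;> simp [toList, hi]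

theorem getD_toList (hi : i < N) : (toList N a).getD i A = a i := by
  simp [toList, hi]

theorem toList_congr (hae : ∀ i < N, a i = e i) : toList N a = toList N e :=
  List.map_congr_left fun i hi => hae i (List.mem_range.1 hi)

theorem toList_getD (w : List KLetter) : toList w.length (fun i => w.getD i A) = w :=
  List.ext_getElem (by simp [toList]) fun i hi hi' => by simp [toList, hi']

theorem take_toList : (toList N a).take j = toList (min j N) a := by
  rw [toList, ← List.map_take, List.take_range, toList]

theorem count_toList : (toList N a).count y = prefixCount a y N := by
  induction N with
  | zero => rfl
  | succ N ih =>
    rw [prefixCount_succ, ← ih, toList, toList, List.range_succ, List.map_append,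
      List.count_append]
    simp [List.count_singleton]

theorem sum_prefixCount : prefixCount a A j + prefixCount a B j + prefixCount a C j = j := by
  induction j with
  | zero => simp [prefixCount_zero]
  | succ j ih =>
    simp only [prefixCount_succ]
    cases a j <;> grind

theorem isKrewerasWord_toList_iff (hn : 0 < n) :
    IsKrewerasWord n (toList (3 * n) a) ↔ IsKreweras (3 * n) a := by
  simp only [IsKrewerasWord, length_toList, take_toList, count_toList, true_and]
  constructor
  · rintro ⟨hA, hB, hC, hle⟩
    refine ⟨by omega, fun j hj y => ?_, fun y => ?_⟩
    · have hj' := hle j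
      rw [min_eq_left hj] at hj'
      cases y
      exacts [le_rfl, hj'.1, hj'.2]
    · cases y <;> omega
  · intro h
    have hsum := sum_prefixCount (a := a) (j := 3 * n)
    have hB := h.eq B
    have hC := h.eq C
    exact ⟨by omega, by omega, by omega, fun j => ⟨h.le _ (min_le_right _ _) B,
      h.le _ (min_le_right _ _) C⟩⟩

theorem IsKreweras.kiota_toList (h : IsKreweras N a) : kiota (toList N a) = bump a + 1 := by
  have hlt := h.bump_lt
  rw [kiota, List.headD_eq_head?_getD, List.head?_filter, Option.getD_eq_iff]
  refine Or.inl (List.find?_range_eq_some.2 ?_)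
  simp only [take_toList, count_toList, length_toList]
  refine ⟨?_, List.mem_range.2 (by omega), fun j hj => ?_⟩
  · rw [min_eq_left (by omega)]
    obtain ⟨hne, heq⟩ := h.bump_spec
    cases hy : a (bump a)
    · exact absurd hy hne
    all_goals simp [← heq, hy]
  · rw [min_eq_left (by omega)]
    rcases j.eq_zero_or_pos with rfl | hj0
    · simp
    · have hB := prefixCount_lt_of_le_bump (a := a) (y := B) (by simp) hj0 (by omega)
      have hC := prefixCount_lt_of_le_bump (a := a) (y := C) (by simp) hj0 (by omega)
      simp [hB.ne', hC.ne']

theorem IsKreweras.pro_toList (h : IsKreweras N a) :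
    pro (toList N a) = toList N (Kreweras.promote N a) := by
  have hpos := h.bump_pos
  have hlt := h.bump_lt
  refine List.ext_getElem? fun i => ?_
  rw [pro, h.kiota_toList, Nat.add_sub_cancel, getD_toList hlt, getElem?_toList,
    List.getElem?_append]
  simp only [List.length_set, List.length_drop, length_toList, List.getElem?_set,
    List.getElem?_drop, getElem?_toList]
  rcases lt_trichotomy (i + 1) N with hi | rfl | hi
  · rw [promote_of_lt hi]
    grind
  · have hlast := h.promote_last
    rw [Nat.add_sub_cancel] at hlast
    simp [hlast]
  · rw [if_neg (by omega), if_neg (by omega),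
      List.getElem?_eq_none (by rw [List.length_singleton]; omega)]

theorem IsKreweras.iterate_pro_toList (h : IsKreweras N a) (k : ℕ) :
    pro^[k] (toList N a) = toList N ((Kreweras.promote N)^[k] a) := by
  induction k with
  | zero => rfl
  | succ k ih =>
    rw [Function.iterate_succ_apply', Function.iterate_succ_apply', ih,
      (h.iterate_promote k).pro_toList]

theorem swap_toList (hm : m + 1 < N) :
    ((toList N a).set m ((toList N a).getD (m + 1) A)).set (m + 1) ((toList N a).getD m A) =
      toList N (a ∘ Equiv.swap m (m + 1)) := by
  refine List.ext_getElem? fun i => ?_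
  rw [getD_toList hm, getD_toList (by omega)]
  simp only [List.getElem?_set, List.length_set, length_toList, getElem?_toList,
    Function.comp_apply, Equiv.swap_apply_def]
  grind

open Classical in
theorem tau_toList (hm : m + 1 < 3 * n) :
    tau n (m + 1) (toList (3 * n) a) = toList (3 * n)
      (if IsKreweras (3 * n) (a ∘ Equiv.swap m (m + 1)) then a ∘ Equiv.swap m (m + 1) else a) := by
  simp only [tau, Nat.add_sub_cancel, swap_toList hm,
    isKrewerasWord_toList_iff (show 0 < n by omega), apply_ite (toList (3 * n))]

theorem IsKreweras.tauDown_toList (h : IsKreweras (3 * n) a) (hm : m < 3 * n) :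
    tauDown n m (toList (3 * n) a) = toList (3 * n) (Kreweras.slide a m) := by
  induction m with
  | zero => rw [tauDown, h.slide_zero]
  | succ m ih =>
    have hslide := h.slide hm
    rw [tauDown, ih (by omega), tau_toList hm]
    rw [slide_succ] at hslide ⊢
    by_cases hbump : m + 1 = bump a
    · rw [if_pos hbump, if_neg (h.not_isKreweras_swap hbump)]
    · rw [if_neg hbump] at hslide ⊢
      rw [if_pos hslide]

/-- Toggling positions `1, …, j + 1` only sees the first `j + 2` letters, so it promotes a word as
far as those are concerned. -/
theorem IsKreweras.evacAux_toList (ha : IsKreweras (3 * n) a) (he : IsKreweras (3 * n) e)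
    (hjk : j + k + 1 = 3 * n) (hea : ∀ i ≤ j, e i = (Kreweras.promote (3 * n))^[k] a i) :
    evacAux n j (toList (3 * n) e) = toList (3 * n) fun i =>
      if i ≤ j then carried ((Kreweras.promote (3 * n))^[3 * n - 1 - i] a) i else e i := by
  induction j generalizing k e with
  | zero =>
    refine toList_congr fun i _ => ?_
    split_ifs with hi
    · obtain rfl : i = 0 := by omega
      rw [he.apply_zero, carried, if_pos (ha.iterate_promote _).bump_pos]
    · rfl
  | succ j ih =>
    have hk := ha.iterate_promote k
    have hslide : ∀ i ≤ j, Kreweras.slide e (j + 1) i = (Kreweras.promote (3 * n))^[k + 1] a i := by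
      intro i hi
      rw [he.slide_congr hk hea (by omega), Function.iterate_succ_apply', slide_of_lt (by omega),
        promote_of_lt (by omega)]
    rw [evacAux, he.tauDown_toList (by omega), ih (he.slide (by omega)) (by omega) hslide]
    refine toList_congr fun i hi => ?_
    rcases lt_trichotomy i (j + 1) with hij | rfl | hij
    · rw [if_pos (by omega), if_pos (by omega)]
    · rw [if_neg (by omega), if_pos le_rfl, slide_self, he.carried_congr hk hea,
        show 3 * n - 1 - (j + 1) = k by omega]
    · rw [if_neg (by omega), if_neg (by omega), slide_of_gt hij]

theorem IsKreweras.evac_toList (h : IsKreweras (3 * n) a) :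
    evac n (toList (3 * n) a) = toList (3 * n) fun i =>
      carried ((Kreweras.promote (3 * n))^[3 * n - 1 - i] a) i := by
  have hpos := h.pos
  rw [evac, h.evacAux_toList h (k := 0) (by omega) fun _ _ => rfl]
  exact toList_congr fun i hi => if_pos (by omega)

theorem IsKreweras.ksigma_toList (h : IsKreweras (3 * n) a) (k : ℕ) :
    ksigma n (toList (3 * n) a) (k + 1) = bumpAt (3 * n) a k % (3 * n) + 1 := by
  rw [ksigma, Nat.add_sub_cancel, h.iterate_pro_toList, (h.iterate_promote k).kiota_toList, bumpAt,
    show ∀ b : ℕ, b + 1 + (k + 1) - 2 = b + k by omega]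

end Lists

end Kreweras

/-- `evac(w) = (w_{σ_w(3n)}, w_{σ_w(3n-1)}, …, w_{σ_w(1)})`: for every
`i ∈ {1, …, 3n}`, the letter of `evac(w)` in position `i` equals `w_{σ_w(3n+1-i)}`
(letters are 1-indexed). -/
theorem evac_via_ksigma (n : ℕ) (w : List KLetter) (hw : IsKrewerasWord n w) :
    ∀ i : ℕ, 1 ≤ i → i ≤ 3 * n →
      (evac n w).getD (i - 1) KLetter.A =
        w.getD (ksigma n w (3 * n + 1 - i) - 1) KLetter.A := by
  intro i hi hin
  obtain ⟨a, rfl⟩ : ∃ a, w = Kreweras.toList (3 * n) a :=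
    ⟨_, hw.1 ▸ (Kreweras.toList_getD w).symm⟩
  have ha : Kreweras.IsKreweras (3 * n) a :=
    (Kreweras.isKrewerasWord_toList_iff (by omega)).1 hw
  have hcarried := ha.carried_iterate_promote (k := 3 * n - i) (by omega)
  rw [ha.evac_toList, show 3 * n + 1 - i = 3 * n - i + 1 by omega, ha.ksigma_toList,
    Nat.add_sub_cancel, Kreweras.getD_toList (by omega),
    Kreweras.getD_toList (Nat.mod_lt _ (by omega)), ← hcarried]
  rw [show 3 * n - 1 - (3 * n - i) = i - 1 by omega, show 3 * n - 1 - (i - 1) = 3 * n - i by omega]
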